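/- Let M ∈ M_n(Z_p) and let χ_M = f_1 ··· f_r be a factorization of its characteristic polynomial in Z_p[t] where the factors are pairwise coprime in Q_p[t]. Then there exists U ∈ GL_n(Z_p) such that U M U⁻¹ is block upper triangular with r diagonal blocks, where the characteristic polynomial of the j-th diagonal block is f_j (i.e., the j-th block accounts exactly for the eigenvalues λ with f_j(λ) = 0). -/

import Mathlib

open Matrix Polynomial

/-!
Induct on the number of factors. If `χ_T = f g` with `f`, `g` monic, then `W = ker f(T)` is
`T`-invariant, and both `W` and `V / W ≅ im f(T)` are free because the base ring is a principal
ideal domain. The restriction of `T` to `W` is annihilated by `f` and the endomorphism of `V / W`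
by `g`, so their characteristic polynomials divide powers of `f` and of `g`; their product being
`f g`, coprimality forces them to be `f` and `g`. A basis of `W` followed by lifts of a basis of
`V / W` adapted to the remaining factors makes the matrix of `T` block triangular.
-/

section MonicFactors

variable {R S : Type*} [CommRing R] [CommRing S] {φ : R →+* S} {a b f g : R[X]}

theorem monic_dvd_left_of_dvd_mul_of_dvd_pow {m : ℕ} (hφ : Function.Injective φ) (ha : a.Monic)
    (hcop : IsCoprime (f.map φ) (g.map φ)) (hmul : a ∣ f * g) (hpow : a ∣ f ^ m) : a ∣ f := by
  have hcop' : IsCoprime (a.map φ) (g.map φ) := by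
    refine (hcop.pow_left (m := m)).of_isCoprime_of_dvd_left ?_
    simpa only [Polynomial.map_pow] using Polynomial.map_dvd φ hpow
  rw [← map_dvd_map φ hφ ha]
  refine hcop'.dvd_of_dvd_mul_right ?_
  simpa only [Polynomial.map_mul] using Polynomial.map_dvd φ hmul

theorem monic_eq_left_of_mul_eq_mul_of_dvd (ha : a.Monic) (hb : b.Monic) (hf : f.Monic)
    (h : a * b = f * g) (haf : a ∣ f) (hbg : b ∣ g) : a = f := by
  obtain ⟨c, rfl⟩ := haf
  obtain ⟨d, rfl⟩ := hbg
  have hcd : c * d = 1 := by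
    refine ((ha.mul hb).isRegular.left ?_).symm
    linear_combination h
  rw [(ha.of_mul_monic_left hf).eq_one_of_isUnit (.of_mul_eq_one _ hcd), mul_one]

theorem monic_eq_of_mul_eq_mul_of_dvd_pow {m n : ℕ} (hφ : Function.Injective φ) (ha : a.Monic)
    (hb : b.Monic) (hf : f.Monic) (hg : g.Monic) (hcop : IsCoprime (f.map φ) (g.map φ))
    (h : a * b = f * g) (haf : a ∣ f ^ m) (hbg : b ∣ g ^ n) : a = f ∧ b = g := by
  have haf' : a ∣ f := monic_dvd_left_of_dvd_mul_of_dvd_pow hφ ha hcop (h ▸ dvd_mul_right a b) haf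
  have hbg' : b ∣ g := monic_dvd_left_of_dvd_mul_of_dvd_pow hφ hb hcop.symm
    (mul_comm f g ▸ h ▸ dvd_mul_left b a) hbg
  exact ⟨monic_eq_left_of_mul_eq_mul_of_dvd ha hb hf h haf' hbg',
    monic_eq_left_of_mul_eq_mul_of_dvd hb ha hg (by rw [mul_comm b, h, mul_comm]) hbg' haf'⟩

end MonicFactors

section Annihilator

variable {R : Type*} [CommRing R] {h : R[X]}

theorem matrix_charpoly_dvd_pow_card_of_aeval_eq_zero {ι : Type*} [Fintype ι] [DecidableEq ι]
    {A : Matrix ι ι R} (hA : aeval A h = 0) : A.charpoly ∣ h ^ Fintype.card ι := by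
  -- `X - Y` divides `h(X) - h(Y)` in `R[Y][X]`; put `Y = A` and take determinants.
  have hdvd : X - C A ∣ h.map (algebraMap R (Matrix ι ι R)) := by
    have hXY : X - C X ∣ h.map C - C h := by
      simpa only [eval_map, eval₂_C_X] using X_sub_C_dvd_sub_C_eval (a := (X : R[X])) (p := h.map C)
    let evalA : R[X] →+* Matrix ι ι R := (aeval A : R[X] →ₐ[R] Matrix ι ι R)
    have hevalA : evalA.comp C = algebraMap R (Matrix ι ι R) := (aeval A).comp_algebraMap
    have hXA := map_dvd (mapRingHom evalA) hXY
    rwa [map_sub, map_sub, coe_mapRingHom, Polynomial.map_map, hevalA, map_X, map_C, map_C,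
      show evalA X = A from aeval_X A, show evalA h = 0 from hA, C_0, sub_zero] at hXA
  rw [← matPolyEquiv_smul_one, ← matPolyEquiv_charmatrix, map_dvd_iff matPolyEquiv] at hdvd
  obtain ⟨Q, hQ⟩ := hdvd
  exact ⟨Q.det, by rw [charpoly, ← det_mul, ← hQ, det_smul, det_one, mul_one]⟩

theorem charpoly_dvd_pow_finrank_of_aeval_eq_zero [Nontrivial R] {V : Type*} [AddCommGroup V]
    [Module R V] [Module.Free R V] [Module.Finite R V] {T : Module.End R V}
    (hT : aeval T h = 0) : T.charpoly ∣ h ^ Module.finrank R V := by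
  rw [LinearMap.charpoly_def, Module.finrank_eq_card_chooseBasisIndex]
  refine matrix_charpoly_dvd_pow_card_of_aeval_eq_zero ?_
  change aeval (LinearMap.toMatrixAlgEquiv (Module.Free.chooseBasis R V) T) h = 0
  rw [aeval_algHom_apply, hT, map_zero]

end Annihilator

section InvariantSubmodule

variable {R V : Type*} [CommRing R] [AddCommGroup V] [Module R V] {T : Module.End R V}

theorem comp_aeval_eq_aeval_comp {V' : Type*} [AddCommGroup V'] [Module R V']
    {T' : Module.End R V'} {j : V →ₗ[R] V'} (hj : j ∘ₗ T = T' ∘ₗ j) (h : R[X]) :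
    j ∘ₗ aeval T h = aeval T' h ∘ₗ j := by
  induction h using Polynomial.induction_on' with
  | add p q hp hq => rw [map_add, map_add, LinearMap.comp_add, LinearMap.add_comp, hp, hq]
  | monomial k a =>
    rw [← smul_X_eq_monomial, map_smul, map_smul, aeval_X_pow, aeval_X_pow, LinearMap.comp_smul,
      LinearMap.smul_comp, Module.End.commute_pow_left_of_commute hj.symm]

theorem ker_aeval_le_comap (T : Module.End R V) (f : R[X]) :
    LinearMap.ker (aeval T f) ≤ (LinearMap.ker (aeval T f)).comap T := fun x hx ↦ by
  have hcomm := comp_aeval_eq_aeval_comp (j := T) rfl f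
  rw [Submodule.mem_comap, LinearMap.mem_ker, ← LinearMap.comp_apply, ← hcomm,
    LinearMap.comp_apply, hx, map_zero]

theorem aeval_restrict_ker_aeval (T : Module.End R V) (f : R[X]) :
    aeval (LinearMap.restrict (q := LinearMap.ker (aeval T f)) T (ker_aeval_le_comap T f)) f =
      0 := by
  ext x
  have hcomm := comp_aeval_eq_aeval_comp (j := (LinearMap.ker (aeval T f)).subtype)
    (T := LinearMap.restrict T (ker_aeval_le_comap T f)) rfl f
  exact (LinearMap.congr_fun hcomm x).trans x.2

theorem aeval_mapQ_ker_aeval {f g : R[X]} (hfg : aeval T (f * g) = 0) :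
    aeval (Submodule.mapQ _ _ T (ker_aeval_le_comap T f)) g = 0 := by
  have hcomm := comp_aeval_eq_aeval_comp (j := (LinearMap.ker (aeval T f)).mkQ)
    (T' := Submodule.mapQ _ _ T (ker_aeval_le_comap T f)) rfl g
  refine Submodule.linearMap_qext _ (LinearMap.ext fun x ↦ ?_)
  rw [← hcomm, LinearMap.comp_apply, Submodule.mkQ_apply, LinearMap.zero_comp,
    LinearMap.zero_apply, Submodule.Quotient.mk_eq_zero, LinearMap.mem_ker,
    ← Module.End.mul_apply, ← map_mul, hfg, LinearMap.zero_apply]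

variable {W : Submodule R V}

theorem toMatrix_sumQuot_eq_fromBlocks {ι κ : Type*} [Fintype ι] [Fintype κ] [DecidableEq ι]
    [DecidableEq κ] (bW : Module.Basis ι R W) (bQ : Module.Basis κ R (V ⧸ W))
    (hW : W ≤ W.comap T) :
    LinearMap.toMatrix (bW.sumQuot bQ) (bW.sumQuot bQ) T =
      fromBlocks (LinearMap.toMatrix bW bW (T.restrict hW))
        (LinearMap.toMatrix (bW.sumQuot bQ) (bW.sumQuot bQ) T).toBlocks₁₂
        0 (LinearMap.toMatrix bQ bQ (W.mapQ W T hW)) := by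
  ext (i | i) (j | j)
  · simp only [LinearMap.toMatrix_apply, Module.Basis.sumQuot_inl, fromBlocks_apply₁₁]
    exact bW.sumQuot_repr_inl_of_mem bQ _ (hW (bW j).2) i
  · rfl
  · simp only [LinearMap.toMatrix_apply, Module.Basis.sumQuot_inl, fromBlocks_apply₂₁,
      Matrix.zero_apply]
    exact bW.sumQuot_repr_inr_of_mem bQ _ (hW (bW j).2) i
  · simp only [LinearMap.toMatrix_apply, Module.Basis.sumQuot_repr_inr, fromBlocks_apply₂₂]
    rw [← bW.sumQuot_inr bQ j, W.mapQ_apply, W.mkQ_apply]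

variable [Module.Free R V] [Module.Finite R V] [Module.Free R W] [Module.Finite R W]
  [Module.Free R (V ⧸ W)]

theorem charpoly_restrict_mul_charpoly_mapQ (hW : W ≤ W.comap T) :
    (T.restrict hW).charpoly * (W.mapQ W T hW).charpoly = T.charpoly := by
  classical
  let bW := Module.Free.chooseBasis R W
  let bQ := Module.Free.chooseBasis R (V ⧸ W)
  rw [← LinearMap.charpoly_toMatrix T (bW.sumQuot bQ), toMatrix_sumQuot_eq_fromBlocks bW bQ hW,
    charpoly_fromBlocks_zero₂₁, LinearMap.charpoly_toMatrix, LinearMap.charpoly_toMatrix]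

theorem charpoly_restrict_eq_and_charpoly_mapQ_eq [Nontrivial R] {S : Type*} [CommRing S]
    {φ : R →+* S} (hφ : Function.Injective φ) {f g : R[X]} (hf : f.Monic) (hg : g.Monic)
    (hcop : IsCoprime (f.map φ) (g.map φ)) (hT : T.charpoly = f * g) (hW : W ≤ W.comap T)
    (hfW : aeval (T.restrict hW) f = 0) (hgQ : aeval (W.mapQ W T hW) g = 0) :
    (T.restrict hW).charpoly = f ∧ (W.mapQ W T hW).charpoly = g :=
  monic_eq_of_mul_eq_mul_of_dvd_pow hφ (LinearMap.charpoly_monic _) (LinearMap.charpoly_monic _)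
    hf hg hcop ((charpoly_restrict_mul_charpoly_mapQ hW).trans hT)
    (charpoly_dvd_pow_finrank_of_aeval_eq_zero hfW) (charpoly_dvd_pow_finrank_of_aeval_eq_zero hgQ)

end InvariantSubmodule

section TriangularBlocks

variable {R α ι κ : Type*} [CommRing R] [Fintype ι] [DecidableEq ι] [Fintype κ] [DecidableEq κ]

theorem charpoly_toSquareBlock_eq_charpoly_submatrix [DecidableEq α] {N : Matrix ι ι R}
    {k : ι → α} {a : α} {e : κ → ι} (he : Function.Injective e)
    (hk : ∀ i, k i = a ↔ i ∈ Set.range e) :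
    (N.toSquareBlock k a).charpoly = (N.submatrix e e).charpoly := by
  let e' : κ ≃ {i // k i = a} :=
    (Equiv.ofInjective e he).trans (Equiv.subtypeEquivRight fun i ↦ (hk i).symm)
  rw [← charpoly_reindex e'.symm]
  rfl

variable [LinearOrder α]

/-- `N` is block upper triangular with one diagonal block for each `a ∈ s`, whose characteristic
polynomial is `f a`. The block decomposition is encoded by the function `k` sending an index to the
label of its block; the indices of one block need not be consecutive. -/
structure HasTriangularBlocks (N : Matrix ι ι R) (k : ι → α) (s : Finset α) (f : α → R[X]) :
    Prop where
  blockTriangular : N.BlockTriangular k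
  mem : ∀ i, k i ∈ s
  charpoly_toSquareBlock : ∀ a ∈ s, (N.toSquareBlock k a).charpoly = f a

namespace HasTriangularBlocks

variable {k : ι → α} {s : Finset α} {f : α → R[X]}

theorem submatrix {N : Matrix ι ι R} (hN : HasTriangularBlocks N k s f) (e : κ ≃ ι) :
    HasTriangularBlocks (N.submatrix e e) (k ∘ e) s f where
  blockTriangular := hN.blockTriangular.submatrix
  mem i := hN.mem (e i)
  charpoly_toSquareBlock a ha := by
    rw [← hN.charpoly_toSquareBlock a ha, charpoly_toSquareBlock_eq_charpoly_submatrix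
      (e := fun i : {i // k i = a} ↦ e.symm i) (e.symm.injective.comp Subtype.val_injective)
      fun i ↦ by simp [e.symm_apply_eq]]
    congr 1
    ext i j
    simp [toSquareBlock_def]

theorem fromBlocks {a : α} {A : Matrix κ κ R} {B : Matrix κ ι R} {D : Matrix ι ι R}
    (hD : HasTriangularBlocks D k s f) (hA : A.charpoly = f a) (has : ∀ x ∈ s, a < x) :
    HasTriangularBlocks (fromBlocks A B 0 D) (Sum.elim (fun _ ↦ a) k) (insert a s) f where
  blockTriangular := by
    rintro (i | i) (j | j) hij
    · exact absurd hij (lt_irrefl a)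
    · exact absurd hij (has _ (hD.mem j)).not_gt
    · rfl
    · exact hD.blockTriangular hij
  mem := by
    rintro (_ | i)
    · exact Finset.mem_insert_self a s
    · exact Finset.mem_insert_of_mem (hD.mem i)
  charpoly_toSquareBlock x hx := by
    obtain rfl | hx := Finset.mem_insert.mp hx
    · rw [← hA, charpoly_toSquareBlock_eq_charpoly_submatrix Sum.inl_injective]
      · rfl
      · rintro (i | i)
        · simp
        · simpa using (has _ (hD.mem i)).ne'
    · rw [← hD.charpoly_toSquareBlock x hx, charpoly_toSquareBlock_eq_charpoly_submatrix
        (e := fun i : {i // k i = x} ↦ Sum.inr i.1) (Sum.inr_injective.comp Subtype.val_injective)]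
      · rfl
      · rintro (i | i)
        · simpa using (has x hx).ne
        · simp

end HasTriangularBlocks

end TriangularBlocks

theorem toMatrix_reindex_eq_submatrix {R V ι κ : Type*} [CommRing R] [AddCommGroup V] [Module R V]
    [Fintype ι] [DecidableEq ι] [Fintype κ] [DecidableEq κ] (b : Module.Basis ι R V) (e : ι ≃ κ)
    (T : Module.End R V) :
    LinearMap.toMatrix (b.reindex e) (b.reindex e) T =
      (LinearMap.toMatrix b b T).submatrix e.symm e.symm := by
  ext i j
  simp [LinearMap.toMatrix_apply]

section PrincipalIdealDomain

variable {R S α : Type*} [CommRing R] [IsDomain R] [IsPrincipalIdealRing R] [CommRing S]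
  [LinearOrder α] {φ : R →+* S} {f : α → R[X]}

theorem exists_basis_hasTriangularBlocks (hφ : Function.Injective φ) (hf : ∀ a, (f a).Monic)
    (hcop : Pairwise fun a b ↦ IsCoprime ((f a).map φ) ((f b).map φ)) (s : Finset α)
    {V : Type*} [AddCommGroup V] [Module R V] {n : ℕ} (c : Module.Basis (Fin n) R V)
    [Module.Free R V] [Module.Finite R V] {T : Module.End R V} (hT : T.charpoly = ∏ a ∈ s, f a) :
    ∃ (b : Module.Basis (Fin n) R V) (k : Fin n → α),
      HasTriangularBlocks (LinearMap.toMatrix b b T) k s f := by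
  induction s using Finset.induction_on_min generalizing V n with
  | empty =>
    obtain rfl : n = 0 := by
      have hdim := T.charpoly_natDegree
      rwa [hT, Finset.prod_empty, natDegree_one, Module.finrank_eq_card_basis c, Fintype.card_fin,
        eq_comm] at hdim
    exact ⟨c, finZeroElim, fun i ↦ i.elim0, fun i ↦ i.elim0, by simp⟩
  | insert a s has ih =>
    have ha : a ∉ s := fun h ↦ lt_irrefl a (has a h)
    rw [Finset.prod_insert ha] at hT
    let W := LinearMap.ker (aeval T (f a))
    have hW : W ≤ W.comap T := ker_aeval_le_comap T (f a)
    have : Module.Free R (V ⧸ W) := .of_equiv (LinearMap.quotKerEquivRange (aeval T (f a))).symm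
    have hcop_s : IsCoprime ((f a).map φ) ((∏ x ∈ s, f x).map φ) := by
      rw [Polynomial.map_prod]
      exact IsCoprime.prod_right fun x hx ↦ hcop (has x hx).ne
    obtain ⟨hcharW, hcharQ⟩ := charpoly_restrict_eq_and_charpoly_mapQ_eq hφ (hf a)
      (monic_prod_of_monic s f fun x _ ↦ hf x) hcop_s hT hW (aeval_restrict_ker_aeval T (f a))
      (aeval_mapQ_ker_aeval (hT ▸ T.aeval_self_charpoly))
    let bW := Module.finBasis R W
    obtain ⟨bQ, k, hk⟩ := ih (Module.finBasis R (V ⧸ W)) hcharQ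
    let b := bW.sumQuot bQ
    let e := b.indexEquiv c
    have hb : HasTriangularBlocks (LinearMap.toMatrix b b T) (Sum.elim (fun _ ↦ a) k)
        (insert a s) f := by
      rw [toMatrix_sumQuot_eq_fromBlocks bW bQ hW]
      exact hk.fromBlocks ((LinearMap.charpoly_toMatrix _ bW).trans hcharW) has
    refine ⟨b.reindex e, Sum.elim (fun _ ↦ a) k ∘ e.symm, ?_⟩
    rw [toMatrix_reindex_eq_submatrix]
    exact hb.submatrix e.symm

end PrincipalIdealDomain

theorem exists_isUnit_toMatrix_toLin'_eq_conj {R ι : Type*} [CommRing R] [Fintype ι]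
    [DecidableEq ι] (b : Module.Basis ι R (ι → R)) (M : Matrix ι ι R) :
    ∃ U : Matrix ι ι R, IsUnit U ∧ LinearMap.toMatrix b b (Matrix.toLin' M) = U * M * U⁻¹ := by
  let c := Pi.basisFun R ι
  have hbc : b.toMatrix c * c.toMatrix b = 1 := b.toMatrix_mul_toMatrix_flip c
  refine ⟨b.toMatrix c, .of_mul_eq_one _ hbc, ?_⟩
  rw [inv_eq_right_inv hbc, ← basis_toMatrix_mul_linearMap_toMatrix_mul_basis_toMatrix b c b c,
    LinearMap.toMatrix_eq_toMatrix', LinearMap.toMatrix'_toLin']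

theorem statement7_general {R S α : Type*} [CommRing R] [IsDomain R] [IsPrincipalIdealRing R]
    [CommRing S] [Fintype α] [LinearOrder α] {φ : R →+* S} (hφ : Function.Injective φ) {n : ℕ}
    (M : Matrix (Fin n) (Fin n) R) (f : α → R[X]) (hf : ∀ a, (f a).Monic)
    (hM : M.charpoly = ∏ a, f a)
    (hcop : Pairwise fun a b ↦ IsCoprime ((f a).map φ) ((f b).map φ)) :
    ∃ U : Matrix (Fin n) (Fin n) R, IsUnit U ∧ ∃ k : Fin n → α, Monotone k ∧
      (U * M * U⁻¹).BlockTriangular k ∧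
        ∀ a, ((U * M * U⁻¹).toSquareBlock k a).charpoly = f a := by
  obtain ⟨b, k, hk⟩ := exists_basis_hasTriangularBlocks hφ hf hcop Finset.univ
    (Pi.basisFun R (Fin n)) ((charpoly_toLin' M).trans hM)
  let σ := Tuple.sort k
  obtain ⟨U, hU, hUM⟩ := exists_isUnit_toMatrix_toLin'_eq_conj (b.reindex σ.symm) M
  have hσ : HasTriangularBlocks (U * M * U⁻¹) (k ∘ σ) Finset.univ f := by
    rw [← hUM, toMatrix_reindex_eq_submatrix]
    exact hk.submatrix σ
  exact ⟨U, hU, k ∘ σ, Tuple.monotone_sort k, hσ.blockTriangular,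
    fun a ↦ hσ.charpoly_toSquareBlock a (Finset.mem_univ a)⟩

/-- if `χ_M = f_1 ⋯ f_r` in `ℤ_p[t]` with pairwise coprime factors in
`ℚ_p[t]`, then there is `U ∈ GL_n(ℤ_p)` conjugating `M` into block upper triangular form
with `r` diagonal blocks, the `j`-th block having characteristic polynomial `f j`. -/
theorem statement7 {p : ℕ} [Fact p.Prime] {n r : ℕ}
    (M : Matrix (Fin n) (Fin n) ℤ_[p]) (f : Fin r → Polynomial ℤ_[p])
    (hmonic : ∀ j, (f j).Monic)
    (hfact : M.charpoly = ∏ j, f j)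
    (hcop : ∀ j k, j ≠ k →
      IsCoprime ((f j).map (PadicInt.Coe.ringHom (p := p)))
        ((f k).map (PadicInt.Coe.ringHom (p := p)))) :
    ∃ U : Matrix (Fin n) (Fin n) ℤ_[p], IsUnit U ∧
      ∃ k : Fin n → Fin r, Monotone k ∧
        (∀ i i' : Fin n, k i' < k i → (U * M * U⁻¹) i i' = 0) ∧
        ∀ j : Fin r,
          Matrix.charpoly
            ((U * M * U⁻¹).submatrix
              (fun x : {i : Fin n // k i = j} => x.1)
              (fun x : {i : Fin n // k i = j} => x.1)) = f j := by
  obtain ⟨U, hU, k, hk, htri, hchar⟩ := statement7_general (φ := PadicInt.Coe.ringHom)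
    Subtype.val_injective M f hmonic hfact hcop
  exact ⟨U, hU, k, hk, fun i i' h ↦ htri h, hchar⟩
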